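/- arXiv:2511.08285 — 3 statements merged into one kernel-verified Lean document; each statement's English description precedes it below -/
import Mathlib

section
/- Let λ1 ≥ λ2 ≥ λ3 > 0 with λ1 + λ2 + λ3 = 1 and λ1 ≠ λ3. Then there exists ε > 0 such that the matrix ρ_λ(ε) = λ1 Φ1(ε) + λ2 |01⟩⟨01| + λ3 Φ2 is a two-qubit density matrix with eigenvalues λ1, λ2, λ3, 0 (hence isospectral to ρ_λ = λ1 Φ1 + λ2 |01⟩⟨01| + λ3 Φ2) that is not separable, and there exists no SEP map Λ satisfying Λ(ρ_λ) = ρ_λ(ε). -/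
open Matrix Kronecker Polynomial
open scoped ComplexOrder

noncomputable section

/-- Index set for two qubits: ℂ²⊗ℂ² ≅ ℂ⁴ with basis |00⟩,|01⟩,|10⟩,|11⟩. -/
abbrev Q2 : Type := Fin 2 × Fin 2
abbrev Mat2 : Type := Matrix (Fin 2) (Fin 2) ℂ
abbrev Mat4 : Type := Matrix Q2 Q2 ℂ
abbrev Vec4 : Type := Q2 → ℂ

/-- Computational basis vector |ij⟩. -/
def ket (i j : Fin 2) : Vec4 := fun p => if p = (i, j) then 1 else 0

/-- The rank-one matrix |ψ⟩⟨φ|. -/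
def ketBra (ψ φ : Vec4) : Mat4 := fun p q => ψ p * star (φ q)

/-- The four Bell vectors |Φ1⟩,…,|Φ4⟩. -/
def bell : Fin 4 → Vec4 :=
  ![(Real.sqrt 2 : ℂ)⁻¹ • (ket 0 0 + ket 1 1),
    (Real.sqrt 2 : ℂ)⁻¹ • (ket 0 0 - ket 1 1),
    (Real.sqrt 2 : ℂ)⁻¹ • (ket 1 0 + ket 0 1),
    (Real.sqrt 2 : ℂ)⁻¹ • (ket 1 0 - ket 0 1)]

/-- Bell projectors Φ_i = |Φ_i⟩⟨Φ_i|. -/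
def bellProj (i : Fin 4) : Mat4 := ketBra (bell i) (bell i)

/-- A two-qubit density matrix: Hermitian positive semidefinite with trace one. -/
def IsDensity (ρ : Mat4) : Prop := ρ.PosSemidef ∧ ρ.trace = 1

/-- Unit vector in ℂ². -/
def IsUnitVec (u : Fin 2 → ℂ) : Prop := ∑ x, Complex.normSq (u x) = 1

/-- Separable two-qubit density matrix: convex mixture of products of pure states. -/
def SepState (ρ : Mat4) : Prop :=
  ∃ (n : ℕ) (p : Fin n → ℝ) (u v : Fin n → Fin 2 → ℂ),
    (∀ i, 0 ≤ p i) ∧ (∑ i, p i = 1) ∧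
    (∀ i, IsUnitVec (u i)) ∧ (∀ i, IsUnitVec (v i)) ∧
    ρ = ∑ i, (p i : ℂ) • (vecMulVec (u i) (star (u i)) ⊗ₖ vecMulVec (v i) (star (v i)))

/-- A SEP map: Kraus operators in product form, trace preserving. -/
def IsSEP (T : Mat4 → Mat4) : Prop :=
  ∃ (k : ℕ) (A B : Fin k → Mat2),
    (∑ i, (A i ⊗ₖ B i)ᴴ * (A i ⊗ₖ B i) = 1) ∧
    ∀ X, T X = ∑ i, (A i ⊗ₖ B i) * X * (A i ⊗ₖ B i)ᴴ

/-- CPTP map in Kraus form. -/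
def IsCPTP (T : Mat4 → Mat4) : Prop :=
  ∃ (k : ℕ) (K : Fin k → Mat4),
    (∑ i, (K i)ᴴ * K i = 1) ∧ ∀ X, T X = ∑ i, K i * X * (K i)ᴴ

/-- Non-entangling (NE) map: CPTP and maps separable states to separable states. -/
def IsNE (T : Mat4 → Mat4) : Prop :=
  IsCPTP T ∧ ∀ ρ, SepState ρ → SepState (T ρ)

/-- The MEMS state ρ_λ = λ1 Φ1 + λ2 |01⟩⟨01| + λ3 Φ2 + λ4 |10⟩⟨10|. -/
def mems (l1 l2 l3 l4 : ℝ) : Mat4 :=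
  (l1 : ℂ) • bellProj 0 + (l2 : ℂ) • ketBra (ket 0 1) (ket 0 1) +
  (l3 : ℂ) • bellProj 1 + (l4 : ℂ) • ketBra (ket 1 0) (ket 1 0)

/-- The Bell-diagonal state σ_λ = λ1 Φ1 + λ2 Φ2 + λ3 Φ3 + λ4 Φ4. -/
def bdiag (l1 l2 l3 l4 : ℝ) : Mat4 :=
  (l1 : ℂ) • bellProj 0 + (l2 : ℂ) • bellProj 1 + (l3 : ℂ) • bellProj 2 + (l4 : ℂ) • bellProj 3

/-- The normalized vector |Φ1(ε)⟩ = (|Φ1⟩ + ε|10⟩)/√(1+ε²). -/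
def phi1eps (ε : ℝ) : Vec4 :=
  (Real.sqrt (1 + ε ^ 2) : ℂ)⁻¹ • (bell 0 + (ε : ℂ) • ket 1 0)

/-- ρ_λ(ε) = λ1 Φ1(ε) + λ2 |01⟩⟨01| + λ3 Φ2. -/
def rho3eps (l1 l2 l3 ε : ℝ) : Mat4 :=
  (l1 : ℂ) • ketBra (phi1eps ε) (phi1eps ε) + (l2 : ℂ) • ketBra (ket 0 1) (ket 0 1) +
    (l3 : ℂ) • bellProj 1

/-- A linear functional that is nonnegative on separable states (entanglement witness). -/
def wit (s t : ℝ) (M : Mat4) : ℝ :=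
  s ^ 2 * (M (0, 1) (0, 1)).re + t ^ 2 * (M (1, 0) (1, 0)).re + 2 * s * t * (M (0, 0) (1, 1)).re

lemma wit_add (s t : ℝ) (M N : Mat4) : wit s t (M + N) = wit s t M + wit s t N := by
  simp [wit]; ring

lemma wit_smul (s t c : ℝ) (M : Mat4) : wit s t ((c : ℂ) • M) = c * wit s t M := by
  simp [wit]; ring

lemma wit_sum (s t : ℝ) {n : ℕ} (F : Fin n → Mat4) :
    wit s t (∑ i, F i) = ∑ i, wit s t (F i) := by
  simp only [wit, Matrix.sum_apply, Complex.re_sum, Finset.mul_sum, Finset.sum_add_distrib]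

lemma wit_nonneg (s t : ℝ) (v : Vec4) (h : v (0, 0) * v (1, 1) = v (0, 1) * v (1, 0)) :
    0 ≤ wit s t (ketBra v v) := by
  have h1 : ‖v (0, 0)‖ * ‖v (1, 1)‖ = ‖v (0, 1)‖ * ‖v (1, 0)‖ := by
    rw [← norm_mul, h, norm_mul]
  have h2 : |(v (0, 0) * star (v (1, 1))).re| ≤ ‖v (0, 1)‖ * ‖v (1, 0)‖ := by
    refine (Complex.abs_re_le_norm _).trans ?_
    rw [norm_mul, norm_star, h1]
  have h3 : ∀ z : ℂ, (z * star z).re = ‖z‖ ^ 2 := by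
    intro z
    rw [← Complex.normSq_eq_norm_sq, ← Complex.ofReal_re (Complex.normSq z),
      ← Complex.mul_conj]
    rfl
  simp only [wit, ketBra, h3]
  have h4 : |s * t * (v (0, 0) * star (v (1, 1))).re| ≤ |s| * |t| * (‖v (0, 1)‖ * ‖v (1, 0)‖) := by
    rw [abs_mul, abs_mul]; gcongr
  have h5 := neg_le_of_abs_le h4
  nlinarith [sq_nonneg (|s| * ‖v (0, 1)‖ - |t| * ‖v (1, 0)‖), sq_abs s, sq_abs t]

lemma mul_ketBra_mul (K : Mat4) (v : Vec4) : K * ketBra v v * Kᴴ = ketBra (K *ᵥ v) (K *ᵥ v) := by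
  have h : ∀ w : Vec4, ketBra w w = vecMulVec w (star w) := fun w => rfl
  rw [h, h, Matrix.mul_vecMulVec, Matrix.vecMulVec_mul, Matrix.star_mulVec]

lemma kron_prod (A B : Mat2) (v : Vec4) (h : A.det * B.det = 0) :
    ((A ⊗ₖ B) *ᵥ v) (0, 0) * ((A ⊗ₖ B) *ᵥ v) (1, 1) =
      ((A ⊗ₖ B) *ᵥ v) (0, 1) * ((A ⊗ₖ B) *ᵥ v) (1, 0) := by
  rw [det_fin_two, det_fin_two] at h
  simp only [mulVec, dotProduct, Fintype.sum_prod_type, Fin.sum_univ_two, kroneckerMap_apply]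
  linear_combination (v (0, 0) * v (1, 1) - v (0, 1) * v (1, 0)) * h

lemma rho_def (l1 l2 l3 ε : ℝ) : rho3eps l1 l2 l3 ε =
    (l1 : ℂ) • ketBra (phi1eps ε) (phi1eps ε) + (l2 : ℂ) • ketBra (ket 0 1) (ket 0 1) +
    (l3 : ℂ) • ketBra (bell 1) (bell 1) := rfl

/-- The kernel vector of `rho3eps`. -/
def chi (ε : ℝ) : Vec4 := (Real.sqrt (1 + ε ^ 2) : ℂ)⁻¹ • (ket 1 0 - (ε : ℂ) • bell 0)

/-- Orthonormal eigenbasis of `rho3eps`. -/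
def eigU (ε : ℝ) : Mat4 := fun p q =>
  (![![phi1eps ε, ket 0 1], ![chi ε, bell 1]] q.1 q.2) p

/-- Eigenvalues. -/
def eigD (l1 l2 l3 : ℝ) : Q2 → ℂ := fun q => ![![(l1 : ℂ), l2], ![0, l3]] q.1 q.2

lemma rho_eq (l1 l2 l3 ε : ℝ) :
    rho3eps l1 l2 l3 ε = eigU ε * diagonal (eigD l1 l2 l3) * (eigU ε)ᴴ := by
  ext p q
  simp [rho_def, Matrix.mul_apply, Matrix.mul_diagonal, Fintype.sum_prod_type, eigU, eigD, ketBra]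
  ring

lemma sqrt_two_inv : ((Real.sqrt 2 : ℂ)⁻¹) ^ 2 = 1 / 2 := by
  rw [inv_pow, ← Complex.ofReal_pow, Real.sq_sqrt (by norm_num)]; norm_num

lemma sqrt_eps_inv (ε : ℝ) : ((Real.sqrt (1 + ε ^ 2) : ℂ)⁻¹) ^ 2 * (1 + (ε : ℂ) ^ 2) = 1 := by
  rw [inv_pow, ← Complex.ofReal_pow, Real.sq_sqrt (by positivity)]
  push_cast
  apply inv_mul_cancel₀
  exact_mod_cast (by positivity : (1 + ε ^ 2) ≠ 0)

lemma eigU_unit (ε : ℝ) : (eigU ε)ᴴ * eigU ε = 1 := by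
  have h2 := sqrt_two_inv
  have h3 := sqrt_eps_inv ε
  ext ⟨i, j⟩ ⟨k, l⟩
  fin_cases i <;> fin_cases j <;> fin_cases k <;> fin_cases l <;>
    simp [Matrix.mul_apply, Fintype.sum_prod_type, eigU, phi1eps, chi, bell, ket,
      Matrix.one_apply] <;>
    generalize (Real.sqrt 2 : ℂ)⁻¹ = r at * <;>
    generalize (Real.sqrt (1 + ε ^ 2) : ℂ)⁻¹ = q at * <;> grind

lemma rho_charpoly (l1 l2 l3 ε : ℝ) : (rho3eps l1 l2 l3 ε).charpoly =
    (X - C (l1 : ℂ)) * (X - C (l2 : ℂ)) * (X - C (l3 : ℂ)) * X := by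
  rw [rho_eq, Matrix.charpoly_mul_comm, ← Matrix.mul_assoc, eigU_unit, Matrix.one_mul,
    Matrix.charpoly_diagonal]
  simp [Fintype.prod_prod_type, eigD]
  ring

lemma rho_density (l1 l2 l3 ε : ℝ) (h1 : 0 ≤ l1) (h2 : 0 ≤ l2) (h3 : 0 ≤ l3)
    (hsum : l1 + l2 + l3 = 1) : IsDensity (rho3eps l1 l2 l3 ε) := by
  rw [rho_eq]
  refine ⟨PosSemidef.mul_mul_conjTranspose_same (PosSemidef.diagonal ?_) _, ?_⟩
  · rintro ⟨i, j⟩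
    fin_cases i <;> fin_cases j <;> simp [eigD, h1, h2, h3]
  · rw [Matrix.trace_mul_comm, ← Matrix.mul_assoc, eigU_unit, Matrix.one_mul]
    simp [Matrix.trace, Fintype.sum_prod_type, eigD]
    exact_mod_cast hsum

lemma sep_wit (s t : ℝ) (ρ : Mat4) (h : SepState ρ) : 0 ≤ wit s t ρ := by
  obtain ⟨n, p, u, v, hp, -, -, -, rfl⟩ := h
  rw [wit_sum]
  refine Finset.sum_nonneg fun i _ => ?_
  rw [wit_smul]
  refine mul_nonneg (hp i) ?_
  have : vecMulVec (u i) (star (u i)) ⊗ₖ vecMulVec (v i) (star (v i)) =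
      ketBra (fun q => u i q.1 * v i q.2) (fun q => u i q.1 * v i q.2) := by
    ext p q
    simp [ketBra, kroneckerMap_apply, vecMulVec_apply]
    ring
  rw [this]
  exact wit_nonneg s t _ (by ring)

/-- Expectation value of `M` in the (unnormalized, real) kernel vector. -/
def expec (x : Vec4) (M : Mat4) : ℂ := star x ⬝ᵥ (M *ᵥ x)

lemma expec_ketBra (x v : Vec4) :
    expec x (ketBra v v) = (Complex.normSq (star x ⬝ᵥ v) : ℝ) := by
  have h : ketBra v v = vecMulVec v (star v) := rfl
  rw [expec, h, Matrix.vecMulVec_mulVec, ← Complex.mul_conj]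
  have : star v ⬝ᵥ x = (starRingEnd ℂ) (star x ⬝ᵥ v) := by
    rw [starRingEnd_apply, Matrix.star_dotProduct]
  rw [← this]
  simp [dotProduct_smul, mul_comm]

lemma expec_rho (l1 l2 l3 ε : ℝ) (K : Mat4) (x : Vec4) :
    expec x (K * rho3eps l1 l2 l3 ε * Kᴴ) =
      ((l1 * Complex.normSq (star x ⬝ᵥ (K *ᵥ phi1eps ε)) +
        l2 * Complex.normSq (star x ⬝ᵥ (K *ᵥ ket 0 1)) +
        l3 * Complex.normSq (star x ⬝ᵥ (K *ᵥ bell 1)) : ℝ) : ℂ) := by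
  have e : K * rho3eps l1 l2 l3 ε * Kᴴ =
      (l1 : ℂ) • ketBra (K *ᵥ phi1eps ε) (K *ᵥ phi1eps ε) +
      (l2 : ℂ) • ketBra (K *ᵥ ket 0 1) (K *ᵥ ket 0 1) +
      (l3 : ℂ) • ketBra (K *ᵥ bell 1) (K *ᵥ bell 1) := by
    simp only [← mul_ketBra_mul, rho_def, Matrix.mul_add, Matrix.add_mul, Matrix.mul_smul,
      Matrix.smul_mul]
  have e2 : ∀ v, star x ⬝ᵥ (ketBra v v *ᵥ x) = (Complex.normSq (star x ⬝ᵥ v) : ℝ) :=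
    fun v => expec_ketBra x v
  rw [e, expec]
  simp only [Matrix.add_mulVec, Matrix.smul_mulVec, dotProduct_add, dotProduct_smul, e2]
  push_cast
  rfl

lemma expec_chi (l1 l2 l3 ε : ℝ) : expec (chi ε) (rho3eps l1 l2 l3 ε) = 0 := by
  have h2 := sqrt_two_inv
  have h := expec_rho l1 l2 l3 ε 1 (chi ε)
  simp only [Matrix.one_mul, Matrix.conjTranspose_one, Matrix.mul_one, Matrix.one_mulVec] at h
  have a1 : star (chi ε) ⬝ᵥ phi1eps ε = 0 := by
    have := congrFun (congrFun (eigU_unit ε) (1, 0)) (0, 0)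
    simpa [Matrix.mul_apply, eigU, dotProduct] using this
  have a2 : star (chi ε) ⬝ᵥ ket 0 1 = 0 := by
    have := congrFun (congrFun (eigU_unit ε) (1, 0)) (0, 1)
    simpa [Matrix.mul_apply, eigU, dotProduct] using this
  have a3 : star (chi ε) ⬝ᵥ bell 1 = 0 := by
    have := congrFun (congrFun (eigU_unit ε) (1, 0)) (1, 1)
    simpa [Matrix.mul_apply, eigU, dotProduct] using this
  rw [h, a1, a2, a3]
  simp

lemma kraus_singular (ε : ℝ) (hε : ε ≠ 0) (A B : Mat2)
    (h1 : star (chi ε) ⬝ᵥ ((A ⊗ₖ B) *ᵥ phi1eps 0) = 0)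
    (h2 : star (chi ε) ⬝ᵥ ((A ⊗ₖ B) *ᵥ ket 0 1) = 0)
    (h3 : star (chi ε) ⬝ᵥ ((A ⊗ₖ B) *ᵥ bell 1) = 0) : A.det * B.det = 0 := by
  have hr := sqrt_two_inv
  have hq := sqrt_eps_inv ε
  have hq0 : (Real.sqrt (1 + ε ^ 2) : ℂ)⁻¹ ≠ 0 := by
    intro h; rw [h] at hq; simp at hq
  have hr0 : (Real.sqrt 2 : ℂ)⁻¹ ≠ 0 := by
    intro h; rw [h] at hr; norm_num at hr
  have hε0 : (ε : ℂ) ≠ 0 := by exact_mod_cast hε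
  rw [det_fin_two, det_fin_two]
  simp [mulVec, dotProduct, Fintype.sum_prod_type, kroneckerMap_apply, chi, phi1eps, bell, ket,
    -Complex.ofReal_eq_zero, -inv_eq_zero] at h1 h2 h3
  generalize (Real.sqrt 2 : ℂ)⁻¹ = r at *
  generalize (Real.sqrt (1 + ε ^ 2) : ℂ)⁻¹ = q at *
  generalize (ε : ℂ) = e at *
  have k1 : A 1 0 * B 0 0 - e * r * (A 0 0 * B 0 0 + A 1 0 * B 1 0) = 0 := by
    have : (2 * q * r) * (A 1 0 * B 0 0 - e * r * (A 0 0 * B 0 0 + A 1 0 * B 1 0)) = 0 := by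
      linear_combination h1 + h3
    exact (mul_eq_zero.1 this).resolve_left (by simp [hq0, hr0])
  have k2 : A 1 0 * B 0 1 - e * r * (A 0 0 * B 0 1 + A 1 0 * B 1 1) = 0 := by
    have : q * (A 1 0 * B 0 1 - e * r * (A 0 0 * B 0 1 + A 1 0 * B 1 1)) = 0 := by
      linear_combination h2
    exact (mul_eq_zero.1 this).resolve_left hq0
  have : (e * r) ^ 2 * ((A 0 0 * A 1 1 - A 0 1 * A 1 0) * (B 0 0 * B 1 1 - B 0 1 * B 1 0)) = 0 := by
    linear_combination (A 1 1 * B 0 1 - e * r * (A 0 1 * B 0 1 + A 1 1 * B 1 1)) * k1 -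
      (A 1 1 * B 0 0 - e * r * (A 0 1 * B 0 0 + A 1 1 * B 1 0)) * k2
  exact (mul_eq_zero.1 this).resolve_left (by simp [hε0, hr0])

lemma SEP_wit (s t l1 l2 l3 ε : ℝ) (h1 : 0 < l1) (h2 : 0 < l2) (h3 : 0 < l3) (hε : ε ≠ 0)
    (h : ∃ T : Mat4 → Mat4, IsSEP T ∧ T (rho3eps l1 l2 l3 0) = rho3eps l1 l2 l3 ε) :
    0 ≤ wit s t (rho3eps l1 l2 l3 ε) := by
  obtain ⟨T, ⟨k, A, B, -, hT⟩, hρ⟩ := h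
  rw [hT] at hρ
  have hx := expec_chi l1 l2 l3 ε
  rw [← hρ, expec, Matrix.sum_mulVec, dotProduct_sum] at hx
  have e := fun i => expec_rho l1 l2 l3 0 (A i ⊗ₖ B i) (chi ε)
  simp only [expec] at e
  simp only [e] at hx
  rw [← Complex.ofReal_sum, Complex.ofReal_eq_zero] at hx
  have nn : ∀ z, 0 ≤ Complex.normSq z := Complex.normSq_nonneg
  rw [Finset.sum_eq_zero_iff_of_nonneg (fun i _ => by
    have := nn (star (chi ε) ⬝ᵥ ((A i ⊗ₖ B i) *ᵥ phi1eps 0))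
    have := nn (star (chi ε) ⬝ᵥ ((A i ⊗ₖ B i) *ᵥ ket 0 1))
    have := nn (star (chi ε) ⬝ᵥ ((A i ⊗ₖ B i) *ᵥ bell 1))
    positivity)] at hx
  rw [← hρ, wit_sum]
  refine Finset.sum_nonneg fun i _ => ?_
  have hi := hx i (Finset.mem_univ i)
  have a1 := mul_nonneg h1.le (nn (star (chi ε) ⬝ᵥ ((A i ⊗ₖ B i) *ᵥ phi1eps 0)))
  have a2 := mul_nonneg h2.le (nn (star (chi ε) ⬝ᵥ ((A i ⊗ₖ B i) *ᵥ ket 0 1)))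
  have a3 := mul_nonneg h3.le (nn (star (chi ε) ⬝ᵥ ((A i ⊗ₖ B i) *ᵥ bell 1)))
  have hd : (A i).det * (B i).det = 0 := by
    refine kraus_singular ε hε _ _ ?_ ?_ ?_
    · exact Complex.normSq_eq_zero.1 ((mul_eq_zero.1 (by linarith)).resolve_left h1.ne')
    · exact Complex.normSq_eq_zero.1 ((mul_eq_zero.1 (by linarith)).resolve_left h2.ne')
    · exact Complex.normSq_eq_zero.1 ((mul_eq_zero.1 (by linarith)).resolve_left h3.ne')
  rw [rho_def]
  simp only [Matrix.mul_add, Matrix.add_mul, Matrix.mul_smul, Matrix.smul_mul, mul_ketBra_mul,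
    wit_add, wit_smul]
  have b1 := wit_nonneg s t _ (kron_prod (A i) (B i) (phi1eps 0) hd)
  have b2 := wit_nonneg s t _ (kron_prod (A i) (B i) (ket 0 1) hd)
  have b3 := wit_nonneg s t _ (kron_prod (A i) (B i) (bell 1) hd)
  positivity

lemma wit_rho (s t l1 l2 l3 ε : ℝ) : wit s t (rho3eps l1 l2 l3 ε) =
    s ^ 2 * l2 + t ^ 2 * (l1 * ε ^ 2 / (1 + ε ^ 2)) +
      2 * s * t * ((l1 / (1 + ε ^ 2) - l3) / 2) := by
  have hr : ((Real.sqrt 2)⁻¹) ^ 2 = 1 / 2 := by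
    rw [inv_pow, Real.sq_sqrt (by norm_num)]; norm_num
  have hq : ((Real.sqrt (1 + ε ^ 2))⁻¹) ^ 2 = (1 + ε ^ 2)⁻¹ := by
    rw [inv_pow, Real.sq_sqrt (by positivity)]
  rw [rho_def, wit_add, wit_add, wit_smul, wit_smul, wit_smul]
  simp [wit, ketBra, phi1eps, bell, ket, -Complex.ofReal_inv, ← Complex.ofReal_inv]
  simp only [div_eq_mul_inv, ← hq]
  generalize (Real.sqrt 2)⁻¹ = r at *
  generalize (Real.sqrt (1 + ε ^ 2))⁻¹ = q at *
  linear_combination (2 * s * t * (l1 * q ^ 2 - l3)) * hr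

theorem no_SEP_rank3 (l1 l2 l3 : ℝ) (h12 : l2 ≤ l1) (h23 : l3 ≤ l2) (h3 : 0 < l3)
    (hsum : l1 + l2 + l3 = 1) (hne : l1 ≠ l3) :
    ∃ ε : ℝ, 0 < ε ∧
      IsDensity (rho3eps l1 l2 l3 ε) ∧
      (rho3eps l1 l2 l3 ε).charpoly =
        (X - C (l1 : ℂ)) * (X - C (l2 : ℂ)) * (X - C (l3 : ℂ)) * X ∧
      ¬ SepState (rho3eps l1 l2 l3 ε) ∧
      ¬ ∃ T : Mat4 → Mat4, IsSEP T ∧ T (rho3eps l1 l2 l3 0) = rho3eps l1 l2 l3 ε := by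
  have hd : 0 < l1 - l3 := by
    have : l3 ≤ l1 := h23.trans h12
    exact sub_pos.2 (lt_of_le_of_ne this (Ne.symm hne))
  have hl2 : 0 < l2 := h3.trans_le h23
  have hl1 : 0 < l1 := hl2.trans_le h12
  obtain ⟨ε, hε⟩ : ∃ ε, ε = (l1 - l3) / 4 := ⟨_, rfl⟩
  have hε0 : 0 < ε := by rw [hε]; positivity
  have hε1 : ε ≤ 1 / 4 := by rw [hε]; linarith
  have hdd : l1 - l3 = 4 * ε := by rw [hε]; ring
  obtain ⟨c, hc⟩ : ∃ c, c = (l1 / (1 + ε ^ 2) - l3) / 2 := ⟨_, rfl⟩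
  obtain ⟨b, hb⟩ : ∃ b, b = l1 * ε ^ 2 / (1 + ε ^ 2) := ⟨_, rfl⟩
  have hp : 0 < 1 + ε ^ 2 := by positivity
  have hb1 : b ≤ l1 * ε ^ 2 := by
    rw [hb]; apply div_le_self (by positivity); nlinarith
  have hbl : l1 / (1 + ε ^ 2) = l1 - b := by rw [hb]; field_simp; ring
  have hl1' : l1 ≤ 1 := by linarith
  have hc1 : ε < c := by
    rw [hc, hbl]; nlinarith [mul_pos hε0 hε0]
  have hneg : wit c (-l2) (rho3eps l1 l2 l3 ε) < 0 := by
    rw [wit_rho, ← hc, ← hb]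
    have h1 : l2 * b < c ^ 2 := by
      have : l2 * b ≤ l2 * (l1 * ε ^ 2) := by gcongr
      have : l2 * l1 ≤ 1 := by nlinarith
      nlinarith [mul_pos hε0 hε0]
    nlinarith
  refine ⟨ε, hε0, rho_density _ _ _ _ hl1.le hl2.le h3.le hsum, rho_charpoly _ _ _ _, ?_, ?_⟩
  · intro h
    exact absurd (sep_wit c (-l2) _ h) (not_le.2 hneg)
  · intro h
    exact absurd (SEP_wit c (-l2) l1 l2 l3 ε hl1 hl2 h3 hε0.ne' h) (not_le.2 hneg)
end
end

section
/- Let λ1 ≥ λ2 ≥ λ3 ≥ λ4 ≥ 0 with λ1 + λ2 + λ3 + λ4 = 1, and suppose 2λ2 + λ3 − λ1 < 0, 2λ3 + λ4 − λ2 ≥ 0, λ3 ≤ 2λ4, and λ2 > λ3 + λ4 (spectral region B). Then there exists no non-entangling (NE) map Λ satisfying Λ(ρ_λ) = σ_λ, where ρ_λ = λ1 Φ1 + λ2 |01⟩⟨01| + λ3 Φ2 + λ4 |10⟩⟨10| and σ_λ = λ1 Φ1 + λ2 Φ2 + λ3 Φ3 + λ4 Φ4. -/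
open Matrix Kronecker Polynomial
open scoped ComplexOrder

noncomputable section

/-- Twice the overlap with Φ1 (s = 1) or Φ2 (s = -1). -/
def ov (s : ℝ) (Y : Mat4) : ℝ :=
  (Y (0,0) (0,0)).re + (Y (1,1) (1,1)).re + s * ((Y (0,0) (1,1)).re + (Y (1,1) (0,0)).re)

lemma ov_add (s : ℝ) (X Y : Mat4) : ov s (X + Y) = ov s X + ov s Y := by
  simp [ov]; ring

lemma ov_smul (s c : ℝ) (X : Mat4) : ov s ((c : ℂ) • X) = c * ov s X := by
  simp [ov]; ring

lemma ov_sum (s : ℝ) {n : ℕ} (f : Fin n → Mat4) : ov s (∑ i, f i) = ∑ i, ov s (f i) := by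
  induction n with
  | zero => simp [ov]
  | succ n ih => rw [Fin.sum_univ_succ, Fin.sum_univ_succ, ov_add, ih]

lemma ov_nonneg (s : ℝ) (hs : s = 1 ∨ s = -1) (Y : Mat4) (hY : Y.PosSemidef) : 0 ≤ ov s Y := by
  have h := hY.dotProduct_mulVec_nonneg (ket 0 0 + (s : ℂ) • ket 1 1)
  have h2 := (Complex.le_def.1 h).1
  rcases hs with rfl | rfl <;>
  · simp [ket, dotProduct, mulVec, Fintype.sum_prod_type, Fin.sum_univ_two] at h2
    simp [ov]
    linarith

lemma ov_le_trace (Y : Mat4) (hY : Y.PosSemidef) : ov 1 Y + ov (-1) Y ≤ 2 * Y.trace.re := by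
  have h1 := (Complex.le_def.1 (hY.diag_nonneg (i := (0,1)))).1
  have h2 := (Complex.le_def.1 (hY.diag_nonneg (i := (1,0)))).1
  simp [ov, Matrix.trace, Fintype.sum_prod_type, Fin.sum_univ_two] at *
  linarith

lemma ov_prod (s : ℝ) (hs : s = 1 ∨ s = -1) (u v : Fin 2 → ℂ) (hu : IsUnitVec u)
    (hv : IsUnitVec v) :
    ov s (vecMulVec u (star u) ⊗ₖ vecMulVec v (star v)) ≤ 1 := by
  simp only [IsUnitVec, Fin.sum_univ_two, Complex.normSq_apply] at hu hv
  simp only [ov, kroneckerMap_apply, vecMulVec_apply, Pi.star_apply, RCLike.star_def,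
    Complex.mul_re, Complex.mul_im, Complex.conj_re, Complex.conj_im]
  generalize (u 0).re = a at *
  generalize (u 0).im = b at *
  generalize (u 1).re = c at *
  generalize (u 1).im = d at *
  generalize (v 0).re = a2 at *
  generalize (v 0).im = b2 at *
  generalize (v 1).re = c2 at *
  generalize (v 1).im = d2 at *
  have key : (a*a+b*b+(c*c+d*d)) * (a2*a2+b2*b2+(c2*c2+d2*d2)) = 1 := by rw [hu, hv]; norm_num
  -- Lagrange: |u|²|v|² - |u0 v0 + s u1 v1|² = |u0 v1^* - s u1 v0^*|²
  rcases hs with rfl | rfl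
  · nlinarith [sq_nonneg ((a*c2+b*d2) - (c*a2+d*b2)), sq_nonneg ((a*d2-b*c2) + (d*a2 - c*b2)),
      sq_nonneg ((a*d2-b*c2) - (d*a2 - c*b2))]
  · nlinarith [sq_nonneg ((a*c2+b*d2) + (c*a2+d*b2)), sq_nonneg ((a*d2-b*c2) + (d*a2 - c*b2)),
      sq_nonneg ((a*d2-b*c2) - (d*a2 - c*b2))]

lemma ov_sep (s : ℝ) (hs : s = 1 ∨ s = -1) (Y : Mat4) (hY : SepState Y) : ov s Y ≤ 1 := by
  obtain ⟨n, p, u, v, hp, hp1, hu, hv, rfl⟩ := hY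
  rw [ov_sum, ← hp1]
  refine Finset.sum_le_sum fun i _ => ?_
  rw [ov_smul]
  have := ov_prod s hs _ _ (hu i) (hv i)
  nlinarith [hp i]

lemma sqrt_two_inv_sq : ((Real.sqrt 2 : ℂ)⁻¹) * ((Real.sqrt 2 : ℂ)⁻¹) = 1/2 := by
  rw [← mul_inv, ← Complex.ofReal_mul, Real.mul_self_sqrt (by norm_num)]; norm_num

/-- explicit (twice) Bell projectors -/
lemma bellProj_zero : bellProj 0 = (1/2 : ℂ) • ketBra (ket 0 0 + ket 1 1) (ket 0 0 + ket 1 1) := by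
  ext p q
  have h := sqrt_two_inv_sq
  simp only [bellProj, bell, ketBra, Matrix.smul_apply, Pi.smul_apply, smul_eq_mul, star_mul',
    Matrix.cons_val_zero, star_inv₀, RCLike.star_def, Complex.conj_ofReal]
  linear_combination ((ket 0 0 + ket 1 1) p * (starRingEnd ℂ) ((ket 0 0 + ket 1 1) q)) * h

lemma bellProj_one : bellProj 1 = (1/2 : ℂ) • ketBra (ket 0 0 - ket 1 1) (ket 0 0 - ket 1 1) := by
  ext p q
  have h := sqrt_two_inv_sq
  simp only [bellProj, bell, ketBra, Matrix.smul_apply, Pi.smul_apply, smul_eq_mul, star_mul',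
    Matrix.cons_val_one, Matrix.cons_val_zero, star_inv₀, RCLike.star_def, Complex.conj_ofReal]
  linear_combination ((ket 0 0 - ket 1 1) p * (starRingEnd ℂ) ((ket 0 0 - ket 1 1) q)) * h

lemma ketBra_psd (ψ : Vec4) : (ketBra ψ ψ).PosSemidef := posSemidef_vecMulVec_self_star ψ

lemma sep_ket (i j : Fin 2) : SepState (ketBra (ket i j) (ket i j)) := by
  refine ⟨1, fun _ => 1, fun _ => Pi.single i 1, fun _ => Pi.single j 1, by simp, by simp,
    ?_, ?_, ?_⟩
  · intro _; fin_cases i <;> simp [IsUnitVec]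
  · intro _; fin_cases j <;> simp [IsUnitVec]
  · ext ⟨a, b⟩ ⟨c, d⟩
    fin_cases i <;> fin_cases j <;> fin_cases a <;> fin_cases b <;> fin_cases c <;> fin_cases d <;>
      simp [ketBra, ket, vecMulVec_apply]

/-- average of |00⟩ and |11⟩ -/
lemma sep_three : SepState ((1/2 : ℝ) • (bellProj 0 + bellProj 1)) := by
  refine ⟨2, fun _ => 1/2, fun i => Pi.single i 1, fun i => Pi.single i 1, by simp,
    by simp, ?_, ?_, ?_⟩
  · intro i; fin_cases i <;> simp [IsUnitVec]
  · intro i; fin_cases i <;> simp [IsUnitVec]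
  · rw [bellProj_zero, bellProj_one]
    ext ⟨a, b⟩ ⟨c, d⟩
    fin_cases a <;> fin_cases b <;> fin_cases c <;> fin_cases d <;>
      simp [ketBra, ket, vecMulVec_apply] <;> norm_num

/-- phase-averaged product states -/
def rt (k : Fin 4) : ℂ := ![1, Complex.I, -1, -Complex.I] k

set_option maxHeartbeats 4000000 in
lemma sep_phase (s : ℝ) (hs : s = 1 ∨ s = -1) :
    SepState ((1/4 : ℝ) • (ketBra (ket 0 0 + (s : ℂ) • ket 1 1) (ket 0 0 + (s : ℂ) • ket 1 1)
      + ketBra (ket 0 1) (ket 0 1) + ketBra (ket 1 0) (ket 1 0))) := by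
  refine ⟨4, fun _ => 1/4, fun k => ![(1 + Complex.I)/2, s * (1 + Complex.I)/2 * star (rt k)],
    fun k => ![(1 + Complex.I)/2, (1 + Complex.I)/2 * rt k], by simp, by simp, ?_, ?_, ?_⟩
  · intro k; rcases hs with rfl | rfl <;> fin_cases k <;>
      simp [IsUnitVec, rt, Complex.normSq_apply] <;> norm_num
  · intro k; fin_cases k <;> simp [IsUnitVec, rt, Complex.normSq_apply] <;> norm_num
  · rcases hs with rfl | rfl <;> ext ⟨a, b⟩ ⟨c, d⟩ <;>
    simp only [Matrix.sum_apply, Fin.sum_univ_four, Matrix.smul_apply, kroneckerMap_apply,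
      vecMulVec_apply, Pi.star_apply] <;>
    fin_cases a <;> fin_cases b <;> fin_cases c <;> fin_cases d <;>
      simp [ketBra, ket, rt] <;>
      apply Complex.ext <;> simp <;> norm_num

theorem no_NE_regionB (l1 l2 l3 l4 : ℝ)
    (h12 : l2 ≤ l1) (h23 : l3 ≤ l2) (h34 : l4 ≤ l3) (h4 : 0 ≤ l4)
    (hsum : l1 + l2 + l3 + l4 = 1)
    (hB1 : 2 * l2 + l3 - l1 < 0) (hB2 : 0 ≤ 2 * l3 + l4 - l2)
    (hB3 : l3 ≤ 2 * l4) (hB4 : l2 > l3 + l4) :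
    ¬ ∃ T : Mat4 → Mat4, IsNE T ∧ T (mems l1 l2 l3 l4) = bdiag l1 l2 l3 l4 := by
  rintro ⟨T, ⟨⟨k, K, hK, hT⟩, hNE⟩, hmap⟩
  have hadd : ∀ X Y, T (X + Y) = T X + T Y := by
    intro X Y
    simp only [hT, mul_add, add_mul, Finset.sum_add_distrib]
  have hsmul : ∀ (c : ℂ) X, T (c • X) = c • T X := by
    intro c X
    simp only [hT, Matrix.mul_smul, Matrix.smul_mul, Finset.smul_sum]
  have hpsd : ∀ X : Mat4, X.PosSemidef → (T X).PosSemidef := by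
    intro X hX
    rw [hT]
    exact Matrix.posSemidef_sum _ fun i _ => hX.mul_mul_conjTranspose_same (K i)
  have htr : ∀ X, (T X).trace = X.trace := by
    intro X
    rw [hT, Matrix.trace_sum]
    have : ∀ i, (K i * X * (K i)ᴴ).trace = ((K i)ᴴ * K i * X).trace := by
      intro i
      rw [Matrix.trace_mul_comm, Matrix.mul_assoc]
    simp only [this]
    rw [← Matrix.trace_sum, ← Finset.sum_mul, hK, one_mul]
  have hrs : ∀ (c : ℝ) (X : Mat4), c • X = (c : ℂ) • X := by
    intro c X; ext; simp
  have s1 := hNE _ (sep_phase 1 (Or.inl rfl))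
  have s2 := hNE _ (sep_phase (-1) (Or.inr rfl))
  have s3 := hNE _ sep_three
  have s01 := hNE _ (sep_ket 0 1)
  have s10 := hNE _ (sep_ket 1 0)
  have e1 : ketBra (ket 0 0 + ((1:ℝ) : ℂ) • ket 1 1) (ket 0 0 + ((1:ℝ) : ℂ) • ket 1 1)
      = ((2:ℝ) : ℂ) • bellProj 0 := by
    rw [bellProj_zero, smul_smul]; simp
  have e2 : ketBra (ket 0 0 + ((-1:ℝ) : ℂ) • ket 1 1) (ket 0 0 + ((-1:ℝ) : ℂ) • ket 1 1)
      = ((2:ℝ) : ℂ) • bellProj 1 := by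
    rw [bellProj_one, smul_smul]; simp [sub_eq_add_neg]
  rw [e1, hrs] at s1
  rw [e2, hrs] at s2
  rw [hrs] at s3
  have f1 := ov_sep 1 (Or.inl rfl) _ s1
  have f3 := ov_sep 1 (Or.inl rfl) _ s3
  have g2 := ov_sep (-1) (Or.inr rfl) _ s2
  have g01 := ov_sep (-1) (Or.inr rfl) _ s01
  have g10 := ov_sep (-1) (Or.inr rfl) _ s10
  simp only [hadd, hsmul, ov_add, ov_smul] at f1 f3 g2
  have p0 := hpsd _ (ketBra_psd (bell 0))
  have t0 := ov_le_trace _ p0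
  have t1 := ov_nonneg (-1) (Or.inr rfl) _ p0
  have q01 := ov_nonneg 1 (Or.inl rfl) _ (hpsd _ (ketBra_psd (ket 0 1)))
  have q10 := ov_nonneg 1 (Or.inl rfl) _ (hpsd _ (ketBra_psd (ket 1 0)))
  rw [htr] at t0
  have tb : (ketBra (bell 0) (bell 0)).trace.re = 1 := by
    change (bellProj 0).trace.re = 1
    rw [bellProj_zero]
    simp [Matrix.trace, ketBra, ket, Fintype.sum_prod_type, Fin.sum_univ_two]
    try norm_num
  rw [tb] at t0
  change ov 1 (T (bellProj 0)) + ov (-1) (T (bellProj 0)) ≤ _ at t0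
  change 0 ≤ ov (-1) (T (bellProj 0)) at t1
  have b0 : ∀ s, ov s (bellProj 0) = 1 + s := by
    intro s; rw [bellProj_zero]; simp [ov, ketBra, ket]; ring
  have b1 : ∀ s, ov s (bellProj 1) = 1 - s := by
    intro s; rw [bellProj_one]; simp [ov, ketBra, ket]; ring
  have b2 : ∀ s, ov s (bellProj 2) = 0 := by
    intro s; simp [ov, bellProj, bell, ketBra, ket]
  have b3 : ∀ s, ov s (bellProj 3) = 0 := by
    intro s; simp [ov, bellProj, bell, ketBra, ket]
  have m1 := congrArg (ov 1) hmap
  have m2 := congrArg (ov (-1)) hmap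
  simp only [mems, bdiag, hadd, hsmul, ov_add, ov_smul, b0, b1, b2, b3] at m1 m2
  generalize ov 1 (T (bellProj 0)) = y1 at *
  generalize ov 1 (T (ketBra (ket 0 1) (ket 0 1))) = y2 at *
  generalize ov 1 (T (bellProj 1)) = y3 at *
  generalize ov 1 (T (ketBra (ket 1 0) (ket 1 0))) = y4 at *
  generalize ov (-1) (T (bellProj 0)) = z1 at *
  generalize ov (-1) (T (ketBra (ket 0 1) (ket 0 1))) = a at *
  generalize ov (-1) (T (bellProj 1)) = b at *
  generalize ov (-1) (T (ketBra (ket 1 0) (ket 1 0))) = c at *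
  have hy : 2 ≤ y1 := by
    by_contra hlt
    push Not at hlt
    have k1 : l4 * y4 ≤ l2 * y4 := by nlinarith
    have k2 : l2 * (y2 + y4) ≤ l2 * (4 - 2 * y1) := by nlinarith
    have k3 : l3 * y3 ≤ l3 * (2 - y1) := by nlinarith
    nlinarith [mul_pos (sub_pos.2 hlt) (neg_pos.2 hB1)]
  have hz : z1 = 0 := by linarith
  subst hz
  have k1 : (l2 - l3 / 2) * a ≤ l2 - l3 / 2 := by nlinarith
  have k2 : (l4 - l3 / 2) * c ≤ l4 - l3 / 2 := by nlinarith
  have k3 : l3 / 2 * (a + c + 2 * b) ≤ l3 / 2 * 4 := by nlinarith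
  nlinarith
end
end

section
/- Let λ1 ≥ λ2 ≥ λ3 ≥ λ4 ≥ 0 with λ1 + λ2 + λ3 + λ4 = 1, and suppose 2λ2 + λ3 − λ1 < 0, 2λ3 + λ4 − λ2 ≥ 0, λ3 > 2λ4, and λ2 > (3/2)λ3 (spectral region C). Then there exists no non-entangling (NE) map Λ satisfying Λ(ρ_λ) = σ_λ, where ρ_λ = λ1 Φ1 + λ2 |01⟩⟨01| + λ3 Φ2 + λ4 |10⟩⟨10| and σ_λ = λ1 Φ1 + λ2 Φ2 + λ3 Φ3 + λ4 Φ4. -/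
open Matrix Kronecker Polynomial
open scoped ComplexOrder

noncomputable section

/-- Expectation value of a matrix in a vector. -/
def expv (b : Vec4) (M : Mat4) : ℂ := star b ⬝ᵥ (M *ᵥ b)

/-- The coefficients of the linear functional `w ↦ ⟨b|K|w⟩`. -/
def func (b : Vec4) (K : Mat4) : Vec4 := star b ᵥ* K

/-- `∑ i, |⟨b|K_i|w⟩|²`. -/
def QQ {k : ℕ} (F : Fin k → Vec4) (w : Vec4) : ℝ := ∑ i, Complex.normSq (F i ⬝ᵥ w)

lemma expv_add (b : Vec4) (M N : Mat4) : expv b (M + N) = expv b M + expv b N := by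
  simp [expv, Matrix.add_mulVec, dotProduct_add]

lemma expv_smul (b : Vec4) (c : ℂ) (M : Mat4) : expv b (c • M) = c * expv b M := by
  simp [expv, Matrix.smul_mulVec, dotProduct_smul]

lemma expv_sum {k : ℕ} (b : Vec4) (M : Fin k → Mat4) :
    expv b (∑ i, M i) = ∑ i, expv b (M i) := by
  simp [expv, Matrix.sum_mulVec, dotProduct_sum]

lemma ketBra_eq (w : Vec4) : ketBra w w = vecMulVec w (star w) := rfl

lemma expv_ketBra (b w : Vec4) : expv b (ketBra w w) = (Complex.normSq (star b ⬝ᵥ w) : ℂ) := by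
  have : star w ⬝ᵥ b = star (star b ⬝ᵥ w) := by
    rw [Matrix.star_dotProduct]
  rw [expv, ketBra_eq, Matrix.vecMulVec_mulVec, this, dotProduct_smul, Complex.normSq_eq_conj_mul_self]
  simp [mul_comm]

lemma conj_ketBra (K : Mat4) (w : Vec4) :
    K * ketBra w w * Kᴴ = ketBra (K *ᵥ w) (K *ᵥ w) := by
  rw [ketBra_eq, ketBra_eq, Matrix.mul_vecMulVec, Matrix.vecMulVec_mul, Matrix.star_mulVec]

lemma expv_T {k : ℕ} (K : Fin k → Mat4) (b w : Vec4) :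
    expv b (∑ i, K i * ketBra w w * (K i)ᴴ) = (QQ (fun i => func b (K i)) w : ℂ) := by
  rw [expv_sum, QQ, Complex.ofReal_sum]
  refine Finset.sum_congr rfl fun i _ => ?_
  rw [conj_ketBra, expv_ketBra, func, Matrix.dotProduct_mulVec]

/-- Product vector. -/
def prodv (u v : Fin 2 → ℂ) : Vec4 := fun p => u p.1 * v p.2

lemma kron_eq (u v : Fin 2 → ℂ) :
    vecMulVec (u) (star u) ⊗ₖ vecMulVec v (star v) = ketBra (prodv u v) (prodv u v) := by
  ext p q
  simp [ketBra, prodv, vecMulVec_apply, kroneckerMap_apply]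
  ring

lemma sqrt2_mul : (Real.sqrt 2)⁻¹ * (Real.sqrt 2)⁻¹ = 1 / 2 := by
  rw [← mul_inv, Real.mul_self_sqrt (by norm_num)]; norm_num

lemma cs_aux (a b c d : ℂ) (h1 : Complex.normSq a + Complex.normSq b = 1)
    (h2 : Complex.normSq c + Complex.normSq d = 1) : Complex.normSq (a * c + b * d) ≤ 1 := by
  have : Complex.normSq (a * c + b * d) + Complex.normSq (a * star d - b * star c)
      = (Complex.normSq a + Complex.normSq b) * (Complex.normSq c + Complex.normSq d) := by
    simp [Complex.normSq_apply]; ring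
  have h3 := Complex.normSq_nonneg (a * star d - b * star c)
  rw [h1, h2] at this
  linarith

lemma bell0_prod (u v : Fin 2 → ℂ) (hu : IsUnitVec u) (hv : IsUnitVec v) :
    Complex.normSq (star (bell 0) ⬝ᵥ prodv u v) ≤ 1 / 2 := by
  simp only [IsUnitVec, Fin.sum_univ_two] at hu hv
  have e : star (bell 0) ⬝ᵥ prodv u v = ((Real.sqrt 2)⁻¹ : ℝ) * (u 0 * v 0 + u 1 * v 1) := by
    simp [dotProduct, Fintype.sum_prod_type, bell, ket, prodv]; ring
  rw [e, Complex.normSq_mul, Complex.normSq_ofReal, sqrt2_mul]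
  have := cs_aux _ _ _ _ hu hv
  linarith

lemma bell1_prod (u v : Fin 2 → ℂ) (hu : IsUnitVec u) (hv : IsUnitVec v) :
    Complex.normSq (star (bell 1) ⬝ᵥ prodv u v) ≤ 1 / 2 := by
  simp only [IsUnitVec, Fin.sum_univ_two] at hu hv
  have e : star (bell 1) ⬝ᵥ prodv u v = ((Real.sqrt 2)⁻¹ : ℝ) * (u 0 * v 0 + (-u 1) * v 1) := by
    simp [dotProduct, Fintype.sum_prod_type, bell, ket, prodv]; ring
  rw [e, Complex.normSq_mul, Complex.normSq_ofReal, sqrt2_mul]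
  have := cs_aux (u 0) (-u 1) _ _ (by simpa using hu) hv
  linarith

lemma sep_bound (b : Vec4)
    (hb : ∀ u v, IsUnitVec u → IsUnitVec v → Complex.normSq (star b ⬝ᵥ prodv u v) ≤ 1 / 2)
    (ρ : Mat4) (hρ : SepState ρ) : (expv b ρ).re ≤ 1 / 2 := by
  obtain ⟨n, p, u, v, hp, hs, hu, hv, rfl⟩ := hρ
  have : expv b (∑ i, (p i : ℂ) • (vecMulVec (u i) (star (u i)) ⊗ₖ vecMulVec (v i) (star (v i))))
      = ((∑ i, p i * Complex.normSq (star b ⬝ᵥ prodv (u i) (v i)) : ℝ) : ℂ) := by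
    rw [expv_sum, Complex.ofReal_sum]
    refine Finset.sum_congr rfl fun i _ => ?_
    rw [expv_smul, kron_eq, expv_ketBra, Complex.ofReal_mul]
  rw [this, Complex.ofReal_re]
  calc _ ≤ ∑ i, p i * (1 / 2) :=
        Finset.sum_le_sum fun i _ => mul_le_mul_of_nonneg_left (hb _ _ (hu i) (hv i)) (hp i)
    _ = 1 / 2 := by rw [← Finset.sum_mul, hs, one_mul]

lemma sep_prod (u v : Fin 2 → ℂ) (hu : IsUnitVec u) (hv : IsUnitVec v) :
    SepState (ketBra (prodv u v) (prodv u v)) := by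
  refine ⟨1, fun _ => 1, fun _ => u, fun _ => v, ?_, ?_, fun _ => hu, fun _ => hv, ?_⟩
  · intro _; norm_num
  · simp
  · simp [kron_eq]

lemma QQ_nonneg {k : ℕ} (F : Fin k → Vec4) (w : Vec4) : 0 ≤ QQ F w :=
  Finset.sum_nonneg fun _ _ => Complex.normSq_nonneg _

/-- Parallelogram law for the first two Bell vectors. -/
lemma QQ_par {k : ℕ} (F : Fin k → Vec4) :
    QQ F (bell 0) + QQ F (bell 1) =
      QQ F (prodv ![1, 0] ![1, 0]) + QQ F (prodv ![0, 1] ![0, 1]) := by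
  simp only [QQ, ← Finset.sum_add_distrib]
  refine Finset.sum_congr rfl fun i _ => ?_
  have e0 : F i ⬝ᵥ bell 0 = ((Real.sqrt 2)⁻¹ : ℝ) * (F i (0, 0) + F i (1, 1)) := by
    simp [dotProduct, Fintype.sum_prod_type, bell, ket]; ring
  have e1 : F i ⬝ᵥ bell 1 = ((Real.sqrt 2)⁻¹ : ℝ) * (F i (0, 0) - F i (1, 1)) := by
    simp [dotProduct, Fintype.sum_prod_type, bell, ket]; ring
  rw [e0, e1, Complex.normSq_mul, Complex.normSq_mul, Complex.normSq_ofReal, sqrt2_mul]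
  simp [dotProduct, Fintype.sum_prod_type, prodv, Complex.normSq_apply]
  ring

/-- Phase average at the balanced point. -/
lemma QQ_avg1 {k : ℕ} (F : Fin k → Vec4) (r : ℝ) (hr : r * r = 1 / 2) :
    QQ F (prodv ![r, r] ![r, r]) + QQ F (prodv ![r, r * Complex.I] ![r, r * (-Complex.I)]) +
    QQ F (prodv ![r, -r] ![r, -r]) + QQ F (prodv ![r, r * (-Complex.I)] ![r, r * Complex.I]) =
      2 * QQ F (bell 0) + QQ F (ket 0 1) + QQ F (ket 1 0) := by
  simp only [QQ, ← Finset.sum_add_distrib, Finset.mul_sum]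
  refine Finset.sum_congr rfl fun i _ => ?_
  have e0 : F i ⬝ᵥ bell 0 = ((Real.sqrt 2)⁻¹ : ℝ) * (F i (0, 0) + F i (1, 1)) := by
    simp [dotProduct, Fintype.sum_prod_type, bell, ket]; ring
  have hr' : (r : ℂ) * r = 1 / 2 := by
    rw [← Complex.ofReal_mul, hr]; norm_num
  have f1 : F i ⬝ᵥ prodv ![(r : ℂ), r] ![(r : ℂ), r] =
      ((1 / 2 : ℝ) : ℂ) * (F i (0, 0) + F i (0, 1) + F i (1, 0) + F i (1, 1)) := by
    simp [dotProduct, Fintype.sum_prod_type, prodv]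
    linear_combination (F i (0, 0) + F i (0, 1) + F i (1, 0) + F i (1, 1)) * hr'
  have f2 : F i ⬝ᵥ prodv ![(r : ℂ), r * Complex.I] ![(r : ℂ), r * (-Complex.I)] =
      ((1 / 2 : ℝ) : ℂ) *
        (F i (0, 0) - Complex.I * F i (0, 1) + Complex.I * F i (1, 0) + F i (1, 1)) := by
    simp [dotProduct, Fintype.sum_prod_type, prodv]
    linear_combination (F i (0, 0) - Complex.I * F i (0, 1) + Complex.I * F i (1, 0) +
      F i (1, 1)) * hr' - F i (1, 1) * r * r * Complex.I_mul_I
  have f3 : F i ⬝ᵥ prodv ![(r : ℂ), -r] ![(r : ℂ), -r] =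
      ((1 / 2 : ℝ) : ℂ) * (F i (0, 0) - F i (0, 1) - F i (1, 0) + F i (1, 1)) := by
    simp [dotProduct, Fintype.sum_prod_type, prodv]
    linear_combination (F i (0, 0) - F i (0, 1) - F i (1, 0) + F i (1, 1)) * hr'
  have f4 : F i ⬝ᵥ prodv ![(r : ℂ), r * (-Complex.I)] ![(r : ℂ), r * Complex.I] =
      ((1 / 2 : ℝ) : ℂ) *
        (F i (0, 0) + Complex.I * F i (0, 1) - Complex.I * F i (1, 0) + F i (1, 1)) := by
    simp [dotProduct, Fintype.sum_prod_type, prodv]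
    linear_combination (F i (0, 0) + Complex.I * F i (0, 1) - Complex.I * F i (1, 0) +
      F i (1, 1)) * hr' - F i (1, 1) * r * r * Complex.I_mul_I
  have g1 : F i ⬝ᵥ ket 0 1 = F i (0, 1) := by
    simp [dotProduct, ket]
  have g2 : F i ⬝ᵥ ket 1 0 = F i (1, 0) := by
    simp [dotProduct, ket]
  rw [e0, f1, f2, f3, f4, g1, g2]
  simp only [Complex.normSq_mul, Complex.normSq_ofReal, sqrt2_mul]
  simp [Complex.normSq_apply]
  ring

/-- Phase average over product vectors orthogonal to the first Bell vector. -/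
lemma QQ_avg2 {k : ℕ} (F : Fin k → Vec4) (t : ℝ) (ht : t * t = 3) :
    QQ F (prodv ![t / 2, 1 / 2] ![-1 / 2, t / 2]) +
    QQ F (prodv ![t / 2, Complex.I / 2] ![-Complex.I / 2, t / 2]) +
    QQ F (prodv ![t / 2, -1 / 2] ![1 / 2, t / 2]) +
    QQ F (prodv ![t / 2, -Complex.I / 2] ![Complex.I / 2, t / 2]) =
      (9 * QQ F (ket 0 1) + 6 * QQ F (bell 1) + QQ F (ket 1 0)) / 4 := by
  simp only [QQ, Finset.mul_sum, ← Finset.sum_add_distrib, Finset.sum_div]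
  refine Finset.sum_congr rfl fun i _ => ?_
  have e0 : F i ⬝ᵥ bell 1 = ((Real.sqrt 2)⁻¹ : ℝ) * (F i (0, 0) - F i (1, 1)) := by
    simp [dotProduct, Fintype.sum_prod_type, bell, ket]; ring
  have ht' : (t : ℂ) * t = 3 := by exact_mod_cast congrArg (fun x : ℝ => (x : ℂ)) ht
  have f1 : F i ⬝ᵥ prodv ![(t : ℂ) / 2, 1 / 2] ![-1 / 2, (t : ℂ) / 2] =
      ((1 / 4 : ℝ) : ℂ) * (3 * F i (0, 1) - F i (1, 0) - t * (F i (0, 0) - F i (1, 1))) := by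
    simp [dotProduct, Fintype.sum_prod_type, prodv]
    linear_combination (F i (0, 1) / 4) * ht'
  have f2 : F i ⬝ᵥ prodv ![(t : ℂ) / 2, Complex.I / 2] ![-Complex.I / 2, (t : ℂ) / 2] =
      ((1 / 4 : ℝ) : ℂ) *
        (3 * F i (0, 1) + F i (1, 0) - t * Complex.I * (F i (0, 0) - F i (1, 1))) := by
    simp [dotProduct, Fintype.sum_prod_type, prodv]
    linear_combination (F i (0, 1) / 4) * ht' - F i (1, 0) / 4 * Complex.I_mul_I
  have f3 : F i ⬝ᵥ prodv ![(t : ℂ) / 2, -1 / 2] ![1 / 2, (t : ℂ) / 2] =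
      ((1 / 4 : ℝ) : ℂ) * (3 * F i (0, 1) - F i (1, 0) + t * (F i (0, 0) - F i (1, 1))) := by
    simp [dotProduct, Fintype.sum_prod_type, prodv]
    linear_combination (F i (0, 1) / 4) * ht'
  have f4 : F i ⬝ᵥ prodv ![(t : ℂ) / 2, -Complex.I / 2] ![Complex.I / 2, (t : ℂ) / 2] =
      ((1 / 4 : ℝ) : ℂ) *
        (3 * F i (0, 1) + F i (1, 0) + t * Complex.I * (F i (0, 0) - F i (1, 1))) := by
    simp [dotProduct, Fintype.sum_prod_type, prodv]
    linear_combination (F i (0, 1) / 4) * ht' - F i (1, 0) / 4 * Complex.I_mul_I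
  have g1 : F i ⬝ᵥ ket 0 1 = F i (0, 1) := by
    simp [dotProduct, ket]
  have g2 : F i ⬝ᵥ ket 1 0 = F i (1, 0) := by
    simp [dotProduct, ket]
  rw [e0, f1, f2, f3, f4, g1, g2]
  simp only [Complex.normSq_mul, Complex.normSq_ofReal, sqrt2_mul]
  simp [Complex.normSq_apply]
  linear_combination ((((F i (0, 0)).re - (F i (1, 1)).re) ^ 2 +
    ((F i (0, 0)).im - (F i (1, 1)).im) ^ 2) / 4) * ht

lemma bell_two (w : Vec4) :
    Complex.normSq (star (bell 0) ⬝ᵥ w) + Complex.normSq (star (bell 1) ⬝ᵥ w) ≤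
      (star w ⬝ᵥ w).re := by
  have e0 : star (bell 0) ⬝ᵥ w = ((Real.sqrt 2)⁻¹ : ℝ) * (w (0, 0) + w (1, 1)) := by
    simp [dotProduct, Fintype.sum_prod_type, bell, ket]; ring
  have e1 : star (bell 1) ⬝ᵥ w = ((Real.sqrt 2)⁻¹ : ℝ) * (w (0, 0) - w (1, 1)) := by
    simp [dotProduct, Fintype.sum_prod_type, bell, ket]; ring
  rw [e0, e1, Complex.normSq_mul, Complex.normSq_mul, Complex.normSq_ofReal, sqrt2_mul]
  simp [dotProduct, Fintype.sum_prod_type, Complex.normSq_apply]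
  nlinarith [sq_nonneg (w (0, 1)).re, sq_nonneg (w (0, 1)).im, sq_nonneg (w (1, 0)).re,
    sq_nonneg (w (1, 0)).im]

lemma QQ_two {k : ℕ} (K : Fin k → Mat4) (hK : ∑ i, (K i)ᴴ * K i = 1) (w : Vec4) :
    QQ (fun i => func (bell 0) (K i)) w + QQ (fun i => func (bell 1) (K i)) w ≤
      (star w ⬝ᵥ w).re := by
  have h : star w ⬝ᵥ w = ∑ i, star (K i *ᵥ w) ⬝ᵥ (K i *ᵥ w) := by
    have h1 : star w ⬝ᵥ w = star w ⬝ᵥ ((∑ i, (K i)ᴴ * K i) *ᵥ w) := by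
      rw [hK, Matrix.one_mulVec]
    rw [h1]
    simp only [Matrix.sum_mulVec, dotProduct_sum, Matrix.star_mulVec,
      ← Matrix.mulVec_mulVec, ← Matrix.dotProduct_mulVec]
  rw [h, Complex.re_sum, QQ, QQ, ← Finset.sum_add_distrib]
  refine Finset.sum_le_sum fun i _ => ?_
  simp only [func, ← Matrix.dotProduct_mulVec]
  exact bell_two _

lemma bell_norm : (star (bell 0) ⬝ᵥ bell 0).re = 1 := by
  have e : star (bell 0) ⬝ᵥ bell 0 = (((Real.sqrt 2)⁻¹ * (Real.sqrt 2)⁻¹ : ℝ) : ℂ) * 2 := by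
    simp [dotProduct, Fintype.sum_prod_type, bell, ket]; ring
  rw [e, sqrt2_mul]; norm_num

lemma expv_mems {k : ℕ} (K : Fin k → Mat4) (b : Vec4) (l1 l2 l3 l4 : ℝ) :
    expv b (∑ i, K i * mems l1 l2 l3 l4 * (K i)ᴴ) =
      ((l1 * QQ (fun i => func b (K i)) (bell 0) + l2 * QQ (fun i => func b (K i)) (ket 0 1) +
        l3 * QQ (fun i => func b (K i)) (bell 1) +
        l4 * QQ (fun i => func b (K i)) (ket 1 0) : ℝ) : ℂ) := by
  have : ∑ i, K i * mems l1 l2 l3 l4 * (K i)ᴴ =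
      (l1 : ℂ) • (∑ i, K i * ketBra (bell 0) (bell 0) * (K i)ᴴ) +
      (l2 : ℂ) • (∑ i, K i * ketBra (ket 0 1) (ket 0 1) * (K i)ᴴ) +
      (l3 : ℂ) • (∑ i, K i * ketBra (bell 1) (bell 1) * (K i)ᴴ) +
      (l4 : ℂ) • (∑ i, K i * ketBra (ket 1 0) (ket 1 0) * (K i)ᴴ) := by
    simp only [mems, bellProj, Matrix.mul_add, Matrix.add_mul, Finset.sum_add_distrib,
      Matrix.mul_smul, Matrix.smul_mul, Finset.smul_sum]
  rw [this]
  simp only [expv_add, expv_smul, expv_T]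
  push_cast
  ring

lemma bell_bell (i j : Fin 4) : Complex.normSq (star (bell i) ⬝ᵥ bell j) = if i = j then 1 else 0 := by
  have h : (Real.sqrt 2)⁻¹ ^ 2 = 1 / 2 := by rw [pow_two, sqrt2_mul]
  have hc : ((Real.sqrt 2 : ℂ))⁻¹ ^ 2 * 2 = 1 := by
    have h' := congrArg (fun x : ℝ => (x : ℂ)) h
    push_cast at h'
    rw [h']; norm_num
  have e : star (bell i) ⬝ᵥ bell j = (((Real.sqrt 2)⁻¹ ^ 2 : ℝ) : ℂ) * (if i = j then 2 else 0) := by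
    fin_cases i <;> fin_cases j <;>
      simp [dotProduct, Fintype.sum_prod_type, bell, ket] <;> first | ring1 | linear_combination hc | linear_combination -hc
  rw [e, h]
  split_ifs <;> simp

lemma expv_bdiag (i : Fin 4) (l1 l2 l3 l4 : ℝ) :
    expv (bell i) (bdiag l1 l2 l3 l4) = ((![l1, l2, l3, l4] i : ℝ) : ℂ) := by
  simp only [bdiag, bellProj, expv_add, expv_smul, expv_ketBra, bell_bell]
  fin_cases i <;> simp

theorem no_NE_regionC (l1 l2 l3 l4 : ℝ)
    (h12 : l2 ≤ l1) (h23 : l3 ≤ l2) (h34 : l4 ≤ l3) (h4 : 0 ≤ l4)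
    (hsum : l1 + l2 + l3 + l4 = 1)
    (hC1 : 2 * l2 + l3 - l1 < 0) (hC2 : 0 ≤ 2 * l3 + l4 - l2)
    (hC3 : l3 > 2 * l4) (hC4 : l2 > (3 / 2) * l3) :
    ¬ ∃ T : Mat4 → Mat4, IsNE T ∧ T (mems l1 l2 l3 l4) = bdiag l1 l2 l3 l4 := by
  rintro ⟨T, ⟨⟨k, K, hK, hT⟩, hNE⟩, hmap⟩
  have half : ∀ b : Vec4,
      (∀ u v, IsUnitVec u → IsUnitVec v → Complex.normSq (star b ⬝ᵥ prodv u v) ≤ 1 / 2) →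
      ∀ u v, IsUnitVec u → IsUnitVec v → QQ (fun i => func b (K i)) (prodv u v) ≤ 1 / 2 := by
    intro b hb u v hu hv
    have h := sep_bound b hb _ (hNE _ (sep_prod u v hu hv))
    rwa [hT, expv_T, Complex.ofReal_re] at h
  have H0 := half _ bell0_prod
  have H1 := half _ bell1_prod
  have S0 := expv_mems K (bell 0) l1 l2 l3 l4
  have S1 := expv_mems K (bell 1) l1 l2 l3 l4
  rw [← hT, hmap, expv_bdiag, Complex.ofReal_inj] at S0 S1
  simp only [Matrix.cons_val_zero, Matrix.cons_val_one] at S0 S1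
  have two := QQ_two K hK (bell 0)
  rw [bell_norm] at two
  generalize (fun i => func (bell 0) (K i)) = F at *
  generalize (fun i => func (bell 1) (K i)) = G at *
  have u10 : IsUnitVec ![1, 0] := by simp [IsUnitVec]
  have u01 : IsUnitVec ![0, 1] := by simp [IsUnitVec]
  have k01 : ket 0 1 = prodv ![1, 0] ![0, 1] := by
    ext ⟨i, j⟩; fin_cases i <;> fin_cases j <;> simp [ket, prodv]
  have k10 : ket 1 0 = prodv ![0, 1] ![1, 0] := by
    ext ⟨i, j⟩; fin_cases i <;> fin_cases j <;> simp [ket, prodv]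
  have par := QQ_par F
  have p1 := H0 _ _ u10 u10
  have p2 := H0 _ _ u01 u01
  set r : ℝ := (Real.sqrt 2)⁻¹ with hr
  have hrr : r * r = 1 / 2 := sqrt2_mul
  have hrr2 : r * r + r * r = 1 := by rw [hrr]; norm_num
  have a1 := QQ_avg1 F r hrr
  have b1 := H0 ![(r : ℂ), r] ![(r : ℂ), r]
    (by simpa [IsUnitVec] using hrr2) (by simpa [IsUnitVec] using hrr2)
  have b2 := H0 ![(r : ℂ), r * Complex.I] ![(r : ℂ), r * (-Complex.I)]
    (by simpa [IsUnitVec] using hrr2) (by simpa [IsUnitVec] using hrr2)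
  have b3 := H0 ![(r : ℂ), -r] ![(r : ℂ), -r]
    (by simpa [IsUnitVec] using hrr2) (by simpa [IsUnitVec] using hrr2)
  have b4 := H0 ![(r : ℂ), r * (-Complex.I)] ![(r : ℂ), r * Complex.I]
    (by simpa [IsUnitVec] using hrr2) (by simpa [IsUnitVec] using hrr2)
  have n1 := QQ_nonneg F (ket 0 1)
  have n2 := QQ_nonneg F (ket 1 0)
  have n3 := QQ_nonneg G (bell 0)
  have n4 := QQ_nonneg G (ket 1 0)
  have c1 := H1 _ _ u10 u01
  have c2 := H1 _ _ u01 u10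
  rw [← k01] at c1
  rw [← k10] at c2
  set t : ℝ := Real.sqrt 3 with ht
  have htt : t * t = 3 := Real.mul_self_sqrt (by norm_num)
  have a2 := QQ_avg2 G t htt
  have d1 := H1 ![(t : ℂ) / 2, 1 / 2] ![-1 / 2, (t : ℂ) / 2]
    (by simp [IsUnitVec]; linarith) (by simp [IsUnitVec]; linarith)
  have d2 := H1 ![(t : ℂ) / 2, Complex.I / 2] ![-Complex.I / 2, (t : ℂ) / 2]
    (by simp [IsUnitVec]; linarith) (by simp [IsUnitVec]; linarith)
  have d3 := H1 ![(t : ℂ) / 2, -1 / 2] ![1 / 2, (t : ℂ) / 2]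
    (by simp [IsUnitVec]; linarith) (by simp [IsUnitVec]; linarith)
  have d4 := H1 ![(t : ℂ) / 2, -Complex.I / 2] ![Complex.I / 2, (t : ℂ) / 2]
    (by simp [IsUnitVec]; linarith) (by simp [IsUnitVec]; linarith)
  have A1 : QQ F (bell 0) + QQ F (bell 1) ≤ 1 := by linarith
  have A2 : 2 * QQ F (bell 0) + QQ F (ket 0 1) + QQ F (ket 1 0) ≤ 2 := by linarith
  have A3 : 9 * QQ G (ket 0 1) + 6 * QQ G (bell 1) + QQ G (ket 1 0) ≤ 8 := by linarith
  clear a1 a2 b1 b2 b3 b4 d1 d2 d3 d4 p1 p2 par H0 H1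
  generalize QQ F (bell 0) = A at *
  generalize QQ F (bell 1) = B at *
  generalize QQ F (ket 0 1) = f at *
  generalize QQ F (ket 1 0) = g at *
  generalize QQ G (bell 0) = z at *
  generalize QQ G (bell 1) = a at *
  generalize QQ G (ket 0 1) = b at *
  generalize QQ G (ket 1 0) = c at *
  have hl3 : 0 ≤ l3 := by linarith
  have q1 : l3 * B ≤ l3 * (1 - A) := mul_le_mul_of_nonneg_left (by linarith) hl3
  have q2 : l2 * f ≤ (l1 - l3) / 2 * f := mul_le_mul_of_nonneg_right (by linarith) n1
  have q3 : l4 * g ≤ (l1 - l3) / 2 * g := mul_le_mul_of_nonneg_right (by linarith) n2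
  have hA : 1 ≤ A := by
    -- strictness in the first spectral condition forces f = g = 0
    have s1 : (l1 - l3) * (2 * A + f + g) ≤ (l1 - l3) * 2 :=
      mul_le_mul_of_nonneg_left (by linarith) (by linarith)
    have hf : f = 0 := by
      by_contra hne
      have : 0 < f := lt_of_le_of_ne n1 (Ne.symm hne)
      have : l2 * f < (l1 - l3) / 2 * f := mul_lt_mul_of_pos_right (by linarith) this
      linarith
    have hg : g = 0 := by
      by_contra hne
      have : 0 < g := lt_of_le_of_ne n2 (Ne.symm hne)
      have : l4 * g < (l1 - l3) / 2 * g := mul_lt_mul_of_pos_right (by linarith) this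
      linarith
    subst hf hg
    by_contra hlt
    have : (l1 - l3) * A < (l1 - l3) * 1 := mul_lt_mul_of_pos_left (by linarith) (by linarith)
    linarith
  have hz : z = 0 := by linarith
  subst hz
  have r1 : l3 * (6 * a) ≤ l3 * (8 - 9 * b - c) := mul_le_mul_of_nonneg_left (by linarith) hl3
  have r2 : (l2 - 3 / 2 * l3) * b ≤ (l2 - 3 / 2 * l3) * (1 / 2) :=
    mul_le_mul_of_nonneg_left (by linarith) (by linarith)
  rcases le_total l4 (l3 / 6) with h | h
  · have r3 : (l4 - l3 / 6) * c ≤ 0 := mul_nonpos_of_nonpos_of_nonneg (by linarith) n4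
    linarith
  · have r3 : (l4 - l3 / 6) * c ≤ (l4 - l3 / 6) * (1 / 2) :=
      mul_le_mul_of_nonneg_left (by linarith) (by linarith)
    linarith
end
end
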